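/- arXiv:q-alg/9701017 — 2 statements merged into one kernel-verified Lean document; each statement's English description precedes it below -/
import Mathlib

section
/- Let R be a commutative ring, A a unital associative R-algebra, n ≥ 1, 1 ≤ p ≤ n−1, and φ : A^n → A an R-multilinear map that vanishes on (p+1)-fold shuffle products. Then d'φ : A^{n−1} → A vanishes on p-fold shuffle products. (Hence d' maps the Hodge component C^{p,q}(A,A) to C^{p−1,q}(A,A).) -/
/-- Insert the unit `1` at position `i` (0-indexed) into a tuple of length `n-1`. -/
def insUnit {A : Type*} [One A] {n : ℕ} (i : Fin n) (a : Fin (n-1) → A) : Fin n → A :=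
  fun k =>
    if h1 : (k : ℕ) < (i : ℕ) then a ⟨k, by have := i.isLt; omega⟩
    else if h2 : (k : ℕ) = (i : ℕ) then 1
    else a ⟨(k : ℕ) - 1, by have := k.isLt; omega⟩

/-- The differential `d' : C^n(A,A) → C^{n-1}(A,A)`, the alternating sum
`(d'φ)(a_1,…,a_{n-1}) = Σ_{j=1}^{n} (−1)^{n−j} φ(a_1,…,a_{j−1},1,a_j,…,a_{n−1})`
of insertions of the unit `1` into the arguments. -/
def dUnit {A : Type*} [Ring A] {n : ℕ} (φ : (Fin n → A) → A) : (Fin (n-1) → A) → A :=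
  fun a => ∑ i : Fin n, ((-1 : ℤ) ^ (n - 1 - (i : ℕ))) • φ (insUnit i a)

/-- The index of the block (of the composition `c`) containing the 0-indexed position `t`. -/
def blockOf (c : List ℕ) (t : ℕ) : ℕ :=
  (List.range c.length).countP (fun k => (c.take (k+1)).sum ≤ t)

/-- A permutation of `{0,…,n-1}` is a `(c_1,…,c_p)`-shuffle if it is strictly increasing
on each of the consecutive blocks of sizes `c_1,…,c_p`. -/
def IsShuffle {n : ℕ} (c : List ℕ) (σ : Equiv.Perm (Fin n)) : Prop :=
  ∀ i j : Fin n, (i : ℕ) < (j : ℕ) → blockOf c i = blockOf c j → σ i < σ j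

instance {n : ℕ} (c : List ℕ) :
    DecidablePred (fun σ : Equiv.Perm (Fin n) => IsShuffle c σ) := fun σ => by
  unfold IsShuffle; infer_instance

/-- A map `φ : A^n → A` vanishes on `p`-fold shuffle products if for every composition
`c` of `n` into `p` positive parts and all `a_1,…,a_n ∈ A` the signed sum of `φ` over all
`c`-shuffles vanishes: `Σ_σ sgn(σ) φ(a_{σ⁻¹(1)},…,a_{σ⁻¹(n)}) = 0`. -/
def VanishesOnShuffleProducts {A : Type*} [Ring A] (p n : ℕ) (φ : (Fin n → A) → A) : Prop :=
  ∀ c : List ℕ, c.length = p → (∀ x ∈ c, 0 < x) → c.sum = n →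
    ∀ a : Fin n → A,
      ∑ σ ∈ Finset.univ.filter (fun σ : Equiv.Perm (Fin n) => IsShuffle c σ),
        ((Equiv.Perm.sign σ : ℤˣ) : ℤ) • φ (fun t => a (σ.symm t)) = 0

theorem blockOf_one_cons_zero (c : List ℕ) : blockOf (1 :: c) 0 = 0 := by
  simp [blockOf]

theorem blockOf_one_cons_succ (c : List ℕ) (t : ℕ) :
    blockOf (1 :: c) (t + 1) = blockOf c t + 1 := by
  simp only [blockOf, List.length_cons, List.range_succ_eq_map, List.countP_cons, List.countP_map]
  simp [Function.comp_def, add_comm 1]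

theorem insUnit_eq_insertNth {A : Type*} [One A] {m : ℕ} (i : Fin (m + 1)) (a : Fin m → A) :
    insUnit (n := m + 1) i a = i.insertNth (α := fun _ => A) 1 a := by
  funext k
  induction k using i.succAboveCases with
  | x => simp [insUnit]
  | p j =>
    rw [Fin.insertNth_apply_succAbove]
    rcases lt_or_ge j.castSucc i with h | h
    · rw [Fin.succAbove_of_castSucc_lt _ _ h]
      have h' : (j : ℕ) < i := h
      simp [insUnit, h']
    · rw [Fin.succAbove_of_le_castSucc _ _ h]
      have h' : (i : ℕ) ≤ j := h
      simp [insUnit, show ¬ (j : ℕ) + 1 < i by omega, show (j : ℕ) + 1 ≠ i by omega]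

/-- The permutation sending `0` to `i` and acting on the remaining indices as `σ`, followed by
the order embedding that skips `i`. -/
def permCons {m : ℕ} (i : Fin (m + 1)) (σ : Equiv.Perm (Fin m)) : Equiv.Perm (Fin (m + 1)) :=
  i.cycleRange.symm * Equiv.Perm.decomposeFin.symm (0, σ)

@[simp]
theorem permCons_zero {m : ℕ} (i : Fin (m + 1)) (σ : Equiv.Perm (Fin m)) :
    permCons i σ 0 = i := by
  simp [permCons]

@[simp]
theorem permCons_succ {m : ℕ} (i : Fin (m + 1)) (σ : Equiv.Perm (Fin m)) (j : Fin m) :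
    permCons i σ j.succ = i.succAbove (σ j) := by
  simp [permCons]

theorem sign_permCons {m : ℕ} (i : Fin (m + 1)) (σ : Equiv.Perm (Fin m)) :
    Equiv.Perm.sign (permCons i σ) = (-1) ^ (i : ℕ) * Equiv.Perm.sign σ := by
  simp [permCons, Equiv.Perm.decomposeFin.symm_sign, Fin.sign_cycleRange]

theorem permCons_bijective (m : ℕ) :
    Function.Bijective fun x : Fin (m + 1) × Equiv.Perm (Fin m) => permCons x.1 x.2 := by
  rw [Fintype.bijective_iff_injective_and_card]
  constructor
  · rintro ⟨i, σ⟩ ⟨i', σ'⟩ h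
    obtain rfl : i = i' := by simpa using DFunLike.congr_fun h 0
    refine Prod.ext rfl (Equiv.ext fun j => ?_)
    simpa using DFunLike.congr_fun h j.succ
  · simp [Fintype.card_perm, Nat.factorial_succ]

theorem isShuffle_permCons {m : ℕ} (c : List ℕ) (i : Fin (m + 1)) (σ : Equiv.Perm (Fin m)) :
    IsShuffle (1 :: c) (permCons i σ) ↔ IsShuffle c σ := by
  simp [IsShuffle, Fin.forall_fin_succ, blockOf_one_cons_zero, blockOf_one_cons_succ]

theorem cons_permCons_symm {A : Type*} {m : ℕ} (i : Fin (m + 1)) (σ : Equiv.Perm (Fin m))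
    (x : A) (a : Fin m → A) :
    (fun t => Fin.cons (α := fun _ => A) x a ((permCons i σ).symm t)) =
      i.insertNth (α := fun _ => A) x fun t => a (σ.symm t) := by
  funext t
  obtain ⟨s, rfl⟩ := (permCons i σ).surjective t
  rw [Equiv.symm_apply_apply]
  cases s using Fin.cases <;> simp


/-- for `n ≥ 1`, `1 ≤ p ≤ n−1`, and an `R`-multilinear map `φ : A^n → A`
vanishing on `(p+1)`-fold shuffle products, the map `d'φ : A^{n−1} → A` vanishes on
`p`-fold shuffle products. -/
theorem dUnit_vanishesOnShuffleProducts {R A : Type*} [CommRing R] [Ring A] [Algebra R A]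
    (n p : ℕ) (hn : 1 ≤ n) (hp : 1 ≤ p) (hpn : p ≤ n - 1)
    (φ : MultilinearMap R (fun _ : Fin n => A) A)
    (hφ : VanishesOnShuffleProducts (p+1) n (⇑φ)) :
    VanishesOnShuffleProducts p (n-1) (dUnit (⇑φ)) := by
  obtain ⟨m, rfl⟩ := Nat.exists_eq_add_of_le' hn
  intro c hc hpos hsum a
  change Fin m → A at a
  have key := hφ (1 :: c) (by simp [hc]) (by simpa using hpos)
    (by rw [List.sum_cons, hsum]; omega) (Fin.cons 1 a)
  rw [Finset.sum_filter, ← (permCons_bijective m).sum_comp] at key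
  simp only [isShuffle_permCons, cons_permCons_symm, sign_permCons, Fintype.sum_prod_type] at key
  rw [Finset.sum_comm] at key
  have hsign (i : Fin (m + 1)) : (-1 : ℤ) ^ (m - (i : ℕ)) = (-1) ^ m * (-1) ^ (i : ℕ) := by
    obtain ⟨k, hk⟩ := Nat.exists_eq_add_of_le (Nat.le_of_lt_succ i.isLt)
    have hi : ((-1 : ℤ) ^ (i : ℕ)) * (-1) ^ (i : ℕ) = 1 := by simp [← mul_pow]
    have hm : (-1 : ℤ) ^ m = (-1) ^ (i : ℕ) * (-1) ^ k := by rw [← pow_add, ← hk]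
    rw [show m - (i : ℕ) = k by omega, hm]
    linear_combination (-(-1 : ℤ) ^ k) * hi
  calc
    _ = (-1 : ℤ) ^ m • (0 : A) := by
      rw [← key, Finset.sum_filter, Finset.smul_sum]
      refine Finset.sum_congr rfl fun (σ : Equiv.Perm (Fin m)) _ => ?_
      split_ifs with h
      · simp only [dUnit, Finset.smul_sum, Nat.add_sub_cancel]
        refine Finset.sum_congr rfl fun i _ => ?_
        rw [smul_smul, smul_smul, hsign]
        congr 1
        · push_cast
          ring
        · rw [insUnit_eq_insertNth]
          rfl
      · simp
    _ = 0 := smul_zero _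
end

section
/- Let k be a field of characteristic zero, A a unital commutative k-algebra, n ≥ 1, p ≥ 1, and φ : A^n → A a k-multilinear map that vanishes on (p+1)-fold shuffle products. Then the Hochschild coboundary dφ : A^{n+1} → A vanishes on (p+1)-fold shuffle products. (Hence the Hochschild differential maps the Hodge component C^{p,q}(A,A) to C^{p,q+1}(A,A).) -/
/-- The Hochschild differential `d : C^n(A,A) → C^{n+1}(A,A)`:
`(dφ)(a_1,…,a_{n+1}) = a_1·φ(a_2,…,a_{n+1}) + Σ_{i=1}^{n} (−1)^i φ(a_1,…,a_i a_{i+1},…,a_{n+1})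
 + (−1)^{n+1} φ(a_1,…,a_n)·a_{n+1}`. -/
def hochschild {A : Type*} [Ring A] {n : ℕ} (φ : (Fin n → A) → A) : (Fin (n+1) → A) → A :=
  fun a =>
    a 0 * φ (fun j => a j.succ)
    + ∑ i : Fin n, ((-1 : ℤ) ^ ((i : ℕ) + 1)) • φ (fun j =>
        if (j : ℕ) < (i : ℕ) then a j.castSucc
        else if (j : ℕ) = (i : ℕ) then a i.castSucc * a i.succ
        else a j.succ)
    + ((-1 : ℤ) ^ (n+1)) • (φ (fun j => a j.castSucc) * a (Fin.last n))

open Equiv Finset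

/-- The rearrangement `π` of the positions keeps the elements of each block of `β` in order. -/
def KeepsBlockOrder {n : ℕ} {ι : Type*} (β : Fin n → ι) (π : Perm (Fin n)) : Prop :=
  ∀ s t : Fin n, s < t → β (π s) = β (π t) → π s < π t

/-- The permutation sending `i` to `v` and given by `τ` on the complements of `i` and `v`. -/
def insertPerm {n : ℕ} (i v : Fin (n + 1)) (τ : Perm (Fin n)) : Perm (Fin (n + 1)) :=
  v.cycleRange.symm * Perm.decomposeFin.symm (0, τ) * i.cycleRange

@[simp]
theorem insertPerm_apply_self {n : ℕ} (i v : Fin (n + 1)) (τ : Perm (Fin n)) :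
    insertPerm i v τ i = v := by
  simp [insertPerm]

@[simp]
theorem insertPerm_apply_succAbove {n : ℕ} (i v : Fin (n + 1)) (τ : Perm (Fin n)) (s : Fin n) :
    insertPerm i v τ (i.succAbove s) = v.succAbove (τ s) := by
  simp [insertPerm]

theorem sign_insertPerm {n : ℕ} (i v : Fin (n + 1)) (τ : Perm (Fin n)) :
    ((Perm.sign (insertPerm i v τ) : ℤˣ) : ℤ) =
      (-1) ^ (i : ℕ) * (-1) ^ (v : ℕ) * ((Perm.sign τ : ℤˣ) : ℤ) := by
  simp [insertPerm, Fin.sign_cycleRange]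
  ring

theorem insertPerm_bijective {n : ℕ} (i : Fin (n + 1)) :
    Function.Bijective fun x : Fin (n + 1) × Perm (Fin n) => insertPerm i x.1 x.2 := by
  rw [Fintype.bijective_iff_injective_and_card]
  refine ⟨?_, by simp [Fintype.card_perm, Nat.factorial_succ]⟩
  rintro ⟨v, τ⟩ ⟨w, ρ⟩ h
  have h' : insertPerm i v τ = insertPerm i w ρ := h
  obtain rfl : v = w := by simpa using congrArg (fun π => π i) h'
  have : τ = ρ := by
    ext1 s
    simpa using congrArg (fun π => π (i.succAbove s)) h'
  rw [this]

theorem sum_perm_eq_sum_insertPerm {n : ℕ} {M : Type*} [AddCommMonoid M] (i : Fin (n + 1))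
    (f : Perm (Fin (n + 1)) → M) :
    ∑ π, f π = ∑ v, ∑ τ, f (insertPerm i v τ) := by
  rw [← Fintype.sum_prod_type']
  exact ((insertPerm_bijective i).sum_comp f).symm

theorem keepsBlockOrder_insertPerm_iff {n : ℕ} {ι : Type*} (β : Fin (n + 1) → ι)
    (i v : Fin (n + 1)) (τ : Perm (Fin n)) :
    KeepsBlockOrder β (insertPerm i v τ) ↔
      KeepsBlockOrder (β ∘ v.succAbove) τ ∧
      (∀ s, i.succAbove s < i → β (v.succAbove (τ s)) = β v → v.succAbove (τ s) < v) ∧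
      (∀ s, i < i.succAbove s → β (v.succAbove (τ s)) = β v → v < v.succAbove (τ s)) := by
  constructor
  · refine fun h => ⟨fun s t hst hβ => ?_, fun s hs hβ => ?_, fun s hs hβ => ?_⟩
    · have := h (i.succAbove s) (i.succAbove t) (by simpa using hst) (by simpa using hβ)
      simpa using this
    · simpa using h _ _ hs (by simpa using hβ)
    · simpa using h _ _ hs (by simpa using hβ.symm)
  · rintro ⟨h, hlt, hgt⟩
    refine fun s t => ?_
    induction s using i.succAboveCases with
    | x =>
      induction t using i.succAboveCases with
      | x => simp
      | p t =>
        intro hs hβ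
        simpa using hgt t hs (by simpa using hβ.symm)
    | p s =>
      induction t using i.succAboveCases with
      | x =>
        intro hs hβ
        simpa using hlt s hs (by simpa using hβ)
      | p t =>
        intro hs hβ
        simpa using h s t (by simpa using hs) (by simpa using hβ)

theorem keepsBlockOrder_insertPerm_zero_iff {n : ℕ} {ι : Type*} (β : Fin (n + 1) → ι)
    (v : Fin (n + 1)) (τ : Perm (Fin n)) :
    KeepsBlockOrder β (insertPerm 0 v τ) ↔
      KeepsBlockOrder (β ∘ v.succAbove) τ ∧ ∀ w, β w = β v → v ≤ w := by
  rw [keepsBlockOrder_insertPerm_iff]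
  refine and_congr_right fun _ => ⟨fun ⟨_, h⟩ w hw => ?_, fun h => ⟨by simp, fun s _ hβ => ?_⟩⟩
  · rcases eq_or_ne w v with rfl | hne
    · exact le_rfl
    · obtain ⟨z, rfl⟩ := Fin.exists_succAbove_eq hne
      simpa using (h (τ.symm z) (by simp) (by simpa using hw)).le
  · exact lt_of_le_of_ne (h _ hβ) (Fin.succAbove_ne _ _).symm

theorem keepsBlockOrder_insertPerm_last_iff {n : ℕ} {ι : Type*} (β : Fin (n + 1) → ι)
    (v : Fin (n + 1)) (τ : Perm (Fin n)) :
    KeepsBlockOrder β (insertPerm (Fin.last n) v τ) ↔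
      KeepsBlockOrder (β ∘ v.succAbove) τ ∧ ∀ w, β w = β v → w ≤ v := by
  rw [keepsBlockOrder_insertPerm_iff]
  refine and_congr_right fun _ => ⟨fun ⟨h, _⟩ w hw => ?_, fun h => ⟨fun s _ hβ => ?_,
    fun s hs => absurd hs (Fin.le_last _).not_gt⟩⟩
  · rcases eq_or_ne w v with rfl | hne
    · exact le_rfl
    · obtain ⟨z, rfl⟩ := Fin.exists_succAbove_eq hne
      simpa using (h (τ.symm z) (by simp [Fin.castSucc_lt_last]) (by simpa using hw)).le
  · exact lt_of_le_of_ne (h _ hβ) (Fin.succAbove_ne _ _)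

/-- Consecutive positions carrying elements of one block carry consecutive elements. -/
theorem KeepsBlockOrder.apply_succ_eq {n : ℕ} {ι : Type*} [PartialOrder ι] {β : Fin (n + 1) → ι}
    (hβ : Monotone β) {π : Perm (Fin (n + 1))} (h : KeepsBlockOrder β π) (i : Fin n)
    (hi : β (π i.castSucc) = β (π i.succ)) :
    (π i.succ : ℕ) = π i.castSucc + 1 := by
  have hlt := h _ _ i.castSucc_lt_succ hi
  by_contra hne
  have hlt' : (π i.castSucc : ℕ) < π i.succ := hlt
  obtain ⟨w, hw⟩ : ∃ w : Fin (n + 1), (w : ℕ) = π i.castSucc + 1 :=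
    ⟨⟨π i.castSucc + 1, by omega⟩, rfl⟩
  have hw₁ : π i.castSucc < w := by rw [Fin.lt_def]; omega
  have hw₂ : w < π i.succ := by rw [Fin.lt_def]; omega
  have hβw : β w = β (π i.castSucc) :=
    le_antisymm (hi ▸ hβ hw₂.le) (hβ hw₁.le)
  obtain ⟨s, rfl⟩ := π.surjective w
  have hs₁ : s ≠ i.castSucc := by rintro rfl; exact lt_irrefl _ hw₁
  have hs₂ : s ≠ i.succ := by rintro rfl; exact lt_irrefl _ hw₂
  rcases lt_or_ge s i.castSucc with hs | hs
  · exact (h _ _ hs hβw).not_gt hw₁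
  · have hs₃ : i.succ < s := by
      rw [Fin.lt_def]
      rw [Fin.le_def] at hs
      rw [Ne, Fin.ext_iff] at hs₁ hs₂
      simp only [Fin.val_castSucc, Fin.val_succ] at *
      omega
    exact (h _ _ hs₃ (hi.symm.trans hβw.symm)).not_gt hw₂

theorem keepsBlockOrder_insertPerm_succ_iff {n : ℕ} {ι : Type*} [PartialOrder ι]
    {β : Fin (n + 1) → ι} (hβ : Monotone β) (i u : Fin n) (τ : Perm (Fin n)) :
    (KeepsBlockOrder β (insertPerm i.succ u.succ τ) ∧
        β (insertPerm i.succ u.succ τ i.castSucc) = β (insertPerm i.succ u.succ τ i.succ)) ↔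
      KeepsBlockOrder (β ∘ u.succ.succAbove) τ ∧ β u.castSucc = β u.succ ∧ τ i = u := by
  have hcast : insertPerm i.succ u.succ τ i.castSucc = u.succ.succAbove (τ i) := by
    rw [← insertPerm_apply_succAbove i.succ, Fin.succAbove_succ_self]
  constructor
  · rintro ⟨h, hi⟩
    have hu := h.apply_succ_eq hβ i hi
    rw [hcast, insertPerm_apply_self] at hu hi
    have hτ : τ i = u := by
      have : u.succ.succAbove (τ i) = u.succ.succAbove u := by
        rw [Fin.succAbove_succ_self, Fin.ext_iff]
        simp only [Fin.val_succ, Fin.val_castSucc] at *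
        omega
      exact Fin.succAbove_right_injective this
    refine ⟨((keepsBlockOrder_insertPerm_iff _ _ _ _).1 h).1, ?_, hτ⟩
    rwa [hτ, Fin.succAbove_succ_self] at hi
  · rintro ⟨h, hu, rfl⟩
    refine ⟨(keepsBlockOrder_insertPerm_iff _ _ _ _).2 ⟨h, fun s hs hβs => ?_, fun s hs hβs => ?_⟩,
      by rw [hcast, insertPerm_apply_self, Fin.succAbove_succ_self, hu]⟩
    · rcases eq_or_ne s i with rfl | hne
      · simp
      · have hsi : s < i := lt_of_le_of_ne
          (by rwa [Fin.succAbove_lt_iff_castSucc_lt, Fin.castSucc_lt_succ_iff] at hs) hne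
        have := h s i hsi (by simpa [hu] using hβs)
        rw [Fin.succAbove_lt_iff_castSucc_lt, Fin.castSucc_lt_succ_iff]
        exact this.le
    · have hsi : i < s := by
        rwa [Fin.lt_succAbove_iff_le_castSucc, Fin.succ_le_castSucc_iff] at hs
      have := h i s hsi (by simpa [hu] using hβs.symm)
      rwa [Fin.lt_succAbove_iff_le_castSucc, Fin.succ_le_castSucc_iff]

theorem KeepsBlockOrder.mul_swap {n : ℕ} {ι : Type*} {β : Fin (n + 1) → ι}
    {π : Perm (Fin (n + 1))} (h : KeepsBlockOrder β π) (i : Fin n)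
    (hi : β (π i.castSucc) ≠ β (π i.succ)) :
    KeepsBlockOrder β (π * swap i.castSucc i.succ) := by
  intro s t hst hβ
  refine h _ _ ?_ hβ
  simp only [Perm.mul_apply] at hβ
  by_cases hs : s = i.castSucc
  · subst hs
    by_cases ht : t = i.succ
    · subst ht
      simp only [swap_apply_left, swap_apply_right] at hβ
      exact absurd hβ.symm hi
    · rw [swap_apply_left, swap_apply_of_ne_of_ne hst.ne' ht]
      exact lt_of_le_of_ne (Fin.castSucc_lt_iff_succ_le.1 hst) (Ne.symm ht)
  · by_cases hs' : s = i.succ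
    · subst hs'
      have := i.castSucc_lt_succ.trans hst
      rwa [swap_apply_right, swap_apply_of_ne_of_ne this.ne' hst.ne']
    · rw [swap_apply_of_ne_of_ne hs hs']
      by_cases ht : t = i.castSucc
      · subst ht
        rw [swap_apply_left]
        exact hst.trans i.castSucc_lt_succ
      · by_cases ht' : t = i.succ
        · subst ht'
          rw [swap_apply_right]
          exact lt_of_le_of_ne (Fin.le_castSucc_iff.2 hst) hs
        · rwa [swap_apply_of_ne_of_ne ht ht']

/-- The tuple obtained from `a` by multiplying the entries `i` and `i + 1`. -/
def mulAdjacent {A : Type*} [Mul A] {n : ℕ} (i : Fin n) (a : Fin (n + 1) → A) : Fin n → A :=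
  fun j => if (j : ℕ) < (i : ℕ) then a j.castSucc
    else if (j : ℕ) = (i : ℕ) then a i.castSucc * a i.succ
    else a j.succ

theorem mulAdjacent_self {A : Type*} [Mul A] {n : ℕ} (i : Fin n) (a : Fin (n + 1) → A) :
    mulAdjacent i a i = a i.castSucc * a i.succ := by
  simp [mulAdjacent]

theorem mulAdjacent_of_ne {A : Type*} [Mul A] {n : ℕ} {i j : Fin n} (h : j ≠ i)
    (a : Fin (n + 1) → A) : mulAdjacent i a j = a (i.succ.succAbove j) := by
  rcases lt_or_gt_of_ne h with h | h
  · rw [Fin.succAbove_of_castSucc_lt _ _ (Fin.castSucc_lt_succ_iff.2 h.le)]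
    simp [mulAdjacent, Fin.lt_def.1 h]
  · rw [Fin.succAbove_of_le_castSucc _ _ (Fin.succ_le_castSucc_iff.2 h)]
    have h' : (i : ℕ) < j := h
    simp [mulAdjacent, h'.not_gt, h'.ne']

theorem mulAdjacent_comp_swap {A : Type*} [CommMagma A] {n : ℕ} (i : Fin n)
    (a : Fin (n + 1) → A) :
    mulAdjacent i (a ∘ swap i.castSucc i.succ) = mulAdjacent i a := by
  ext j
  rcases eq_or_ne j i with rfl | h
  · simp [mulAdjacent_self, mul_comm]
  · have h₁ : i.succ.succAbove j ≠ i.castSucc := by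
      rw [← Fin.succAbove_succ_self]
      exact fun h' => h (Fin.succAbove_right_injective h')
    rw [mulAdjacent_of_ne h, mulAdjacent_of_ne h, Function.comp_apply,
      swap_apply_of_ne_of_ne h₁ (Fin.succAbove_ne _ _)]

theorem mulAdjacent_comp_insertPerm {A : Type*} [Mul A] {n : ℕ} (i : Fin n)
    (τ : Perm (Fin n)) (a : Fin (n + 1) → A) :
    mulAdjacent i (a ∘ insertPerm i.succ (τ i).succ τ) = mulAdjacent (τ i) a ∘ τ := by
  ext j
  rcases eq_or_ne j i with rfl | h
  · rw [Function.comp_apply, mulAdjacent_self, mulAdjacent_self, Function.comp_apply,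
      Function.comp_apply, insertPerm_apply_self]
    conv_lhs => rw [← Fin.succAbove_succ_self j, insertPerm_apply_succAbove,
      Fin.succAbove_succ_self]
  · rw [Function.comp_apply, mulAdjacent_of_ne h, mulAdjacent_of_ne (τ.injective.ne h),
      Function.comp_apply, insertPerm_apply_succAbove]

theorem hochschild_eq {A : Type*} [CommRing A] {n : ℕ} (φ : (Fin n → A) → A)
    (a : Fin (n + 1) → A) :
    hochschild φ a = a 0 * φ (a ∘ (0 : Fin (n + 1)).succAbove)
      + ∑ i : Fin n, ((-1 : ℤ) ^ ((i : ℕ) + 1)) • φ (mulAdjacent i a)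
      + ((-1 : ℤ) ^ (n + 1)) • (a (Fin.last n) * φ (a ∘ (Fin.last n).succAbove)) := by
  simp only [hochschild, mul_comm (φ _)]
  congr 4
  ext j
  simp

theorem surjective_comp_succAbove {n : ℕ} {ι : Type*} {β : Fin (n + 1) → ι}
    (hβ : Function.Surjective β) {v w : Fin (n + 1)} (hne : w ≠ v) (hw : β w = β v) :
    Function.Surjective (β ∘ v.succAbove) := by
  intro x
  obtain ⟨y, rfl⟩ := hβ x
  rcases eq_or_ne y v with rfl | hy
  · obtain ⟨z, rfl⟩ := Fin.exists_succAbove_eq hne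
    exact ⟨z, hw⟩
  · obtain ⟨z, rfl⟩ := Fin.exists_succAbove_eq hy
    exact ⟨z, rfl⟩

open scoped Classical in
/-- The signed sum of `φ` over all rearrangements of `a` that keep the blocks of `β` in order. -/
noncomputable def blockShuffleSum {A : Type*} [Ring A] {n : ℕ} {ι : Type*} (β : Fin n → ι)
    (φ : (Fin n → A) → A) (a : Fin n → A) : A :=
  ∑ π : Perm (Fin n), if KeepsBlockOrder β π then
    ((Perm.sign π : ℤˣ) : ℤ) • φ (a ∘ π) else 0

open scoped Classical in
/-- The contribution to the signed shuffle sum of the outer face of the Hochschild differential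
reading position `i`, expanded over the element `v` placed at `i`. -/
theorem sum_outer_face {A : Type*} [CommRing A] {n : ℕ} {ι : Type*} {β : Fin (n + 1) → ι}
    (φ : (Fin n → A) → A) (a : Fin (n + 1) → A) (i : Fin (n + 1)) (P : Fin (n + 1) → Prop)
    (hP : ∀ v τ, KeepsBlockOrder β (insertPerm i v τ) ↔
      KeepsBlockOrder (β ∘ v.succAbove) τ ∧ P v) :
    (∑ π : Perm (Fin (n + 1)), if KeepsBlockOrder β π then
      ((Perm.sign π : ℤˣ) : ℤ) • (a (π i) * φ ((a ∘ π) ∘ i.succAbove)) else 0) =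
    ∑ v, if P v then ((-1 : ℤ) ^ (i : ℕ) * (-1) ^ (v : ℕ)) •
      (a v * blockShuffleSum (β ∘ v.succAbove) φ (a ∘ v.succAbove)) else 0 := by
  rw [sum_perm_eq_sum_insertPerm i]
  refine sum_congr rfl fun v _ => ?_
  have hcomp : ∀ τ, (a ∘ insertPerm i v τ) ∘ i.succAbove = (a ∘ v.succAbove) ∘ τ := by
    intro τ; ext s; simp
  simp only [hP, hcomp, insertPerm_apply_self, sign_insertPerm, blockShuffleSum]
  by_cases hv : P v
  · simp only [hv, and_true, if_true, mul_sum, smul_sum]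
    refine sum_congr rfl fun τ _ => ?_
    split_ifs
    · rw [mul_smul, mul_smul_comm]
    · simp
  · simp [hv]

open scoped Classical in
/-- The terms in which the multiplied elements lie in different blocks cancel in pairs. -/
theorem sum_inner_face_of_ne {A : Type*} [CommRing A] {n : ℕ} {ι : Type*} (β : Fin (n + 1) → ι)
    (φ : (Fin n → A) → A) (a : Fin (n + 1) → A) (i : Fin n) :
    (∑ π : Perm (Fin (n + 1)),
      if KeepsBlockOrder β π ∧ β (π i.castSucc) ≠ β (π i.succ) then
        ((Perm.sign π : ℤˣ) : ℤ) • φ (mulAdjacent i (a ∘ π)) else 0) = 0 := by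
  rw [← sum_filter]
  have hne : i.castSucc ≠ i.succ := i.castSucc_lt_succ.ne
  refine sum_involution (fun π _ => π * swap i.castSucc i.succ) ?_ ?_ ?_ ?_
  · intro π _
    have hcomp : a ∘ ⇑(π * swap i.castSucc i.succ) = (a ∘ π) ∘ swap i.castSucc i.succ := rfl
    rw [hcomp, mulAdjacent_comp_swap]
    simp [Perm.sign_swap hne]
  · intro π _ _ h
    exact hne (swap_eq_one_iff.1 (mul_eq_left.1 h))
  · intro π hπ
    simp only [mem_filter, mem_univ, true_and] at hπ ⊢
    refine ⟨hπ.1.mul_swap i hπ.2, ?_⟩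
    simpa using hπ.2.symm
  · intro π _
    simp [mul_assoc]

open scoped Classical in
theorem sum_inner_face {A : Type*} [CommRing A] {n : ℕ} {ι : Type*} [PartialOrder ι]
    {β : Fin (n + 1) → ι} (hβ : Monotone β) (φ : (Fin n → A) → A) (a : Fin (n + 1) → A)
    (i : Fin n) :
    (∑ π : Perm (Fin (n + 1)), if KeepsBlockOrder β π then
      ((Perm.sign π : ℤˣ) : ℤ) • φ (mulAdjacent i (a ∘ π)) else 0) =
    ∑ u : Fin n, ∑ τ : Perm (Fin n),
      if KeepsBlockOrder (β ∘ u.succ.succAbove) τ ∧ β u.castSucc = β u.succ ∧ τ i = u then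
        ((-1 : ℤ) ^ ((i : ℕ) + 1) * (-1) ^ ((u : ℕ) + 1) * ((Perm.sign τ : ℤˣ) : ℤ)) •
          φ (mulAdjacent u a ∘ τ) else 0 := by
  have hsplit : ∀ π : Perm (Fin (n + 1)),
      (if KeepsBlockOrder β π then
        ((Perm.sign π : ℤˣ) : ℤ) • φ (mulAdjacent i (a ∘ π)) else 0) =
      (if KeepsBlockOrder β π ∧ β (π i.castSucc) ≠ β (π i.succ) then
        ((Perm.sign π : ℤˣ) : ℤ) • φ (mulAdjacent i (a ∘ π)) else 0) +
      (if KeepsBlockOrder β π ∧ β (π i.castSucc) = β (π i.succ) then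
        ((Perm.sign π : ℤˣ) : ℤ) • φ (mulAdjacent i (a ∘ π)) else 0) := by
    intro π
    by_cases h : KeepsBlockOrder β π <;> by_cases h' : β (π i.castSucc) = β (π i.succ) <;>
      simp [h, h']
  rw [sum_congr rfl fun π _ => hsplit π, sum_add_distrib, sum_inner_face_of_ne, zero_add,
    sum_perm_eq_sum_insertPerm i.succ, Fin.sum_univ_succ]
  have hzero : ∀ τ, ¬ (KeepsBlockOrder β (insertPerm i.succ 0 τ) ∧
      β (insertPerm i.succ 0 τ i.castSucc) = β (insertPerm i.succ 0 τ i.succ)) := by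
    rintro τ ⟨h, hi⟩
    have := h.apply_succ_eq hβ i hi
    simp at this
  rw [sum_eq_zero fun τ _ => if_neg (hzero τ), zero_add]
  refine sum_congr rfl fun u _ => sum_congr rfl fun τ _ => ?_
  simp only [keepsBlockOrder_insertPerm_succ_iff hβ]
  split_ifs with h
  · obtain ⟨_, _, rfl⟩ := h
    rw [mulAdjacent_comp_insertPerm, sign_insertPerm, Fin.val_succ, Fin.val_succ]
  · rfl

open scoped Classical in
theorem sum_inner_faces {A : Type*} [CommRing A] {n : ℕ} {ι : Type*} [PartialOrder ι]
    {β : Fin (n + 1) → ι} (hβ : Monotone β) (φ : (Fin n → A) → A) (a : Fin (n + 1) → A) :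
    (∑ i : Fin n, ((-1 : ℤ) ^ ((i : ℕ) + 1)) • ∑ π : Perm (Fin (n + 1)),
      if KeepsBlockOrder β π then
        ((Perm.sign π : ℤˣ) : ℤ) • φ (mulAdjacent i (a ∘ π)) else 0) =
    ∑ u : Fin n, if β u.castSucc = β u.succ then ((-1 : ℤ) ^ ((u : ℕ) + 1)) •
      blockShuffleSum (β ∘ u.succ.succAbove) φ (mulAdjacent u a) else 0 := by
  simp only [sum_inner_face hβ, smul_sum]
  rw [sum_comm]
  refine sum_congr rfl fun u _ => ?_
  rw [sum_comm]
  by_cases hu : β u.castSucc = β u.succ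
  · simp only [hu, true_and, if_true, blockShuffleSum, smul_sum]
    refine sum_congr rfl fun τ _ => ?_
    rw [sum_eq_single (τ.symm u)]
    · simp only [apply_symm_apply, and_true]
      split_ifs
      · rw [smul_smul, smul_smul, ← mul_assoc, ← mul_assoc, ← pow_add, Even.neg_one_pow ⟨_, rfl⟩,
          one_mul]
      · simp
    · intro i _ hi
      rw [if_neg, smul_zero]
      rintro ⟨_, h⟩
      exact hi (by simp [← h])
    · simp
  · simp [hu]

/-- The Hochschild differential preserves the vanishing of the signed sums over the shuffles of
all sequences of `ι`-indexed nonempty consecutive blocks. -/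
theorem blockShuffleSum_hochschild {A : Type*} [CommRing A] {n : ℕ} {ι : Type*} [PartialOrder ι]
    {φ : (Fin n → A) → A}
    (hφ : ∀ β : Fin n → ι, Monotone β → Function.Surjective β → ∀ a, blockShuffleSum β φ a = 0)
    {β : Fin (n + 1) → ι} (hβ : Monotone β) (hβs : Function.Surjective β)
    (a : Fin (n + 1) → A) :
    blockShuffleSum β (hochschild φ) a = 0 := by
  classical
  have hremove : ∀ v w, w ≠ v → β w = β v → ∀ b,
      blockShuffleSum (β ∘ v.succAbove) φ b = 0 := fun v w hne hw b =>
    hφ _ (hβ.comp (Fin.strictMono_succAbove v).monotone) (surjective_comp_succAbove hβs hne hw) b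
  have hfaces : blockShuffleSum β (hochschild φ) a =
      (∑ π : Perm (Fin (n + 1)), if KeepsBlockOrder β π then
        ((Perm.sign π : ℤˣ) : ℤ) • (a (π 0) * φ ((a ∘ π) ∘ (0 : Fin (n + 1)).succAbove)) else 0) +
      (∑ i : Fin n, ((-1 : ℤ) ^ ((i : ℕ) + 1)) • ∑ π : Perm (Fin (n + 1)),
        if KeepsBlockOrder β π then
          ((Perm.sign π : ℤˣ) : ℤ) • φ (mulAdjacent i (a ∘ π)) else 0) +
      ((-1 : ℤ) ^ (n + 1)) • (∑ π : Perm (Fin (n + 1)), if KeepsBlockOrder β π then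
        ((Perm.sign π : ℤˣ) : ℤ) •
          (a (π (Fin.last n)) * φ ((a ∘ π) ∘ (Fin.last n).succAbove)) else 0) := by
    simp only [smul_sum]
    rw [sum_comm, ← sum_add_distrib, ← sum_add_distrib]
    refine sum_congr rfl fun π _ => ?_
    by_cases h : KeepsBlockOrder β π
    · simp only [h, if_true, hochschild_eq, smul_add, smul_sum, Function.comp_apply]
      simp only [smul_comm ((-1 : ℤ) ^ _)]
    · simp [h]
  rw [hfaces, sum_inner_faces hβ,
    sum_outer_face φ a 0 _ (keepsBlockOrder_insertPerm_zero_iff β),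
    sum_outer_face φ a (Fin.last n) _ (keepsBlockOrder_insertPerm_last_iff β),
    sum_eq_zero (s := univ (α := Fin n)), add_zero, smul_sum, ← sum_add_distrib]
  · refine sum_eq_zero fun v _ => ?_
    by_cases hv : ∃ w, w ≠ v ∧ β w = β v
    · obtain ⟨w, hne, hw⟩ := hv
      simp [hremove v w hne hw]
    · push Not at hv
      have hv' : ∀ w, β w = β v → w = v := fun w hw => by
        by_contra hne
        exact hv w hne hw
      rw [if_pos fun w hw => (hv' w hw).ge, if_pos fun w hw => (hv' w hw).le, smul_smul,
        ← add_smul]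
      have : (-1 : ℤ) ^ ((0 : Fin (n + 1)) : ℕ) * (-1) ^ (v : ℕ) +
          (-1) ^ (n + 1) * ((-1) ^ (Fin.last n : ℕ) * (-1) ^ (v : ℕ)) = 0 := by
        rw [Fin.val_zero, Fin.val_last, ← mul_assoc, ← pow_add _ (n + 1) n,
          Odd.neg_one_pow (n := n + 1 + n) ⟨n, by ring⟩]
        ring
      rw [this, zero_smul]
  · intro u _
    split_ifs with hu
    · rw [hremove u.succ u.castSucc u.castSucc_lt_succ.ne hu, smul_zero]
    · rfl

theorem countP_range_lt {q b : ℕ} (h : b ≤ q) :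
    (List.range q).countP (fun k => decide (k < b)) = b := by
  induction q with
  | zero => simpa using (Nat.le_zero.1 h).symm
  | succ q ih =>
    rw [List.range_succ, List.countP_append]
    rcases h.lt_or_eq with h | rfl
    · rw [ih (Nat.lt_succ_iff.1 h)]
      simpa using Nat.lt_succ_iff.1 h
    · rw [List.countP_eq_length.2 fun k hk => by
        simpa using (List.mem_range.1 hk).trans (Nat.lt_succ_self q)]
      simp

theorem blockOf_eq_of_forall {c : List ℕ} {t b : ℕ} (hb : b ≤ c.length)
    (h : ∀ k < c.length, (c.take (k + 1)).sum ≤ t ↔ k < b) : blockOf c t = b := by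
  rw [← countP_range_lt hb, blockOf]
  exact List.countP_congr fun k hk => by simpa using h k (List.mem_range.1 hk)

theorem blockOf_mono (c : List ℕ) : Monotone (blockOf c) := fun s t hst =>
  List.countP_mono_left fun k _ h => by simp only [decide_eq_true_eq] at h ⊢; omega

theorem sum_take_le_sum_take_iff {c : List ℕ} (hc : ∀ x ∈ c, 0 < x) {i j : ℕ}
    (hi : i ≤ c.length) : (c.take i).sum ≤ (c.take j).sum ↔ i ≤ j := by
  induction c generalizing i j with
  | nil => simp at hi; simp [hi]
  | cons x c ih =>
    have hx := hc x (by simp)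
    cases i with
    | zero => simp
    | succ i =>
      cases j with
      | zero => simp; omega
      | succ j =>
        simpa using ih (fun y hy => hc y (List.mem_cons_of_mem x hy)) (i := i) (j := j)
          (by simpa using hi)

theorem blockOf_lt_length {c : List ℕ} {t : ℕ} (ht : t < c.sum) : blockOf c t < c.length := by
  have hc : c ≠ [] := by rintro rfl; simp at ht
  have hpos : 0 < c.length := List.length_pos_iff.2 hc
  refine lt_of_le_of_ne (List.countP_le_length.trans_eq List.length_range) fun h => ?_
  have := (List.countP_eq_length.1 (h.trans List.length_range.symm)) (c.length - 1)
    (List.mem_range.2 (by omega))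
  rw [Nat.sub_add_cancel hpos, List.take_length] at this
  simp only [decide_eq_true_eq] at this
  omega

theorem blockOf_sum_take {c : List ℕ} (hc : ∀ x ∈ c, 0 < x) {j : ℕ} (hj : j < c.length) :
    blockOf c (c.take j).sum = j :=
  blockOf_eq_of_forall hj.le fun k hk => by
    rw [sum_take_le_sum_take_iff hc (Nat.succ_le_of_lt hk), Nat.succ_le_iff]

theorem sum_isShuffle_eq_blockShuffleSum {A : Type*} [Ring A] {n : ℕ} {ι : Type*} {c : List ℕ}
    {β : Fin n → ι} (hβ : ∀ s t : Fin n, blockOf c s = blockOf c t ↔ β s = β t)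
    (φ : (Fin n → A) → A) (a : Fin n → A) :
    ∑ σ ∈ univ.filter (fun σ : Perm (Fin n) => IsShuffle c σ),
      ((Perm.sign σ : ℤˣ) : ℤ) • φ (fun t => a (σ.symm t)) = blockShuffleSum β φ a := by
  classical
  rw [sum_filter, blockShuffleSum, ← Equiv.sum_comp (Equiv.inv (Perm (Fin n)))]
  refine sum_congr rfl fun π _ => ?_
  have hiff : IsShuffle c π⁻¹ ↔ KeepsBlockOrder β π := by
    constructor
    · intro h s t hst hb
      by_contra hlt
      have hne : π t ≠ π s := π.injective.ne hst.ne'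
      have hlt' : π t < π s := lt_of_le_of_ne (not_lt.1 hlt) hne
      have := h (π t) (π s) hlt' ((hβ _ _).2 hb.symm)
      rw [Perm.inv_def, symm_apply_apply, symm_apply_apply] at this
      exact this.not_gt hst
    · intro h s t hst hb
      by_contra hlt
      have hne : π⁻¹ t ≠ π⁻¹ s := π⁻¹.injective.ne (Fin.ne_of_gt hst)
      have := h (π⁻¹ t) (π⁻¹ s) (lt_of_le_of_ne (not_lt.1 hlt) hne)
        (by simpa using ((hβ _ _).1 hb).symm)
      rw [Perm.inv_def, apply_symm_apply, apply_symm_apply] at this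
      exact this.not_gt hst
  simp only [Equiv.inv_apply, hiff, Perm.sign_inv]
  rfl

/-- Vanishing on `q`-fold shuffle products, in terms of the block functions. -/
theorem vanishesOnShuffleProducts_iff {A : Type*} [Ring A] {q n : ℕ} {φ : (Fin n → A) → A} :
    VanishesOnShuffleProducts q n φ ↔
      ∀ β : Fin n → Fin q, Monotone β → Function.Surjective β →
        ∀ a, blockShuffleSum β φ a = 0 := by
  constructor
  · intro h β hβ hβs a
    have hsum : ∀ k : ℕ, ((List.ofFn fun j => #{s | β s = j}).take k).sum =
        #{s | (β s : ℕ) < k} := by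
      intro k
      rw [List.sum_take_ofFn, card_eq_sum_card_fiberwise (f := β) (t := {j | (j : ℕ) < k})]
      · refine sum_congr rfl fun j hj => congrArg card ?_
        ext s
        simp only [mem_filter, mem_univ, true_and] at hj ⊢
        exact ⟨fun hs => ⟨hs ▸ hj, hs⟩, fun hs => hs.2⟩
      · intro s hs
        simpa using hs
    have hblock : ∀ t : Fin n, blockOf (List.ofFn fun j => #{s | β s = j}) t = β t := by
      intro t
      refine blockOf_eq_of_forall (by simp) fun k _ => ?_
      rw [hsum]
      constructor
      · intro hle
        by_contra hk
        have hsub : Iic t ⊆ ({s | (β s : ℕ) < k + 1} : Finset (Fin n)) := by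
          intro s hs
          have : (β s : ℕ) ≤ β t := hβ (mem_Iic.1 hs)
          simp only [mem_filter, mem_univ, true_and]
          omega
        have := card_le_card hsub
        rw [Fin.card_Iic] at this
        omega
      · intro hk
        have hsub : ({s | (β s : ℕ) < k + 1} : Finset (Fin n)) ⊆ Iio t := by
          intro s hs
          simp only [mem_filter, mem_univ, true_and] at hs
          by_contra hst
          have : (β t : ℕ) ≤ β s := hβ (by simpa using hst)
          omega
        have := card_le_card hsub
        rwa [Fin.card_Iio] at this
    rw [← sum_isShuffle_eq_blockShuffleSum (c := List.ofFn fun j => #{s | β s = j})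
      (fun s t => by rw [hblock, hblock, Fin.ext_iff])]
    refine h _ (by simp) ?_ ?_ a
    · intro x hx
      obtain ⟨j, rfl⟩ := (List.mem_ofFn' _ _).1 hx
      obtain ⟨s, hs⟩ := hβs j
      exact card_pos.2 ⟨s, by simpa using hs⟩
    · have := hsum q
      rw [List.take_of_length_le (by simp)] at this
      simpa using this
  · rintro h c rfl hc rfl a
    rw [sum_isShuffle_eq_blockShuffleSum
      (β := fun t => (⟨blockOf c t, blockOf_lt_length t.2⟩ : Fin c.length))
      (fun s t => by simp)]
    refine h _ (fun s t hst => blockOf_mono c hst) (fun j => ?_) a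
    have hlt : (c.take j).sum < c.sum := by
      have := (sum_take_le_sum_take_iff (j := j) hc le_rfl).not.2 j.2.not_ge
      rw [List.take_length] at this
      omega
    exact ⟨⟨_, hlt⟩, Fin.ext (blockOf_sum_take hc j.2)⟩


/-- over a field `k` of characteristic zero, for a unital commutative
`k`-algebra `A`, `n ≥ 1`, `p ≥ 1`, and a `k`-multilinear map `φ : A^n → A` vanishing on
`(p+1)`-fold shuffle products, the Hochschild coboundary `dφ : A^{n+1} → A` also vanishes
on `(p+1)`-fold shuffle products. -/
theorem hochschild_vanishesOnShuffleProducts {k A : Type*} [Field k] [CharZero k]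
    [CommRing A] [Algebra k A]
    (n p : ℕ) (hn : 1 ≤ n) (hp : 1 ≤ p)
    (φ : MultilinearMap k (fun _ : Fin n => A) A)
    (hφ : VanishesOnShuffleProducts (p+1) n (⇑φ)) :
    VanishesOnShuffleProducts (p+1) (n+1) (hochschild (⇑φ)) := by
  rw [vanishesOnShuffleProducts_iff] at hφ ⊢
  exact fun β hβ hβs a => blockShuffleSum_hochschild hφ hβ hβs a
end
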